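/- Let G be a prime (P6, bull)-free graph, let x be a vertex of G, and suppose the set of non-neighbors of x contains an induced 5-cycle. Then there is a (possibly empty) clique F in G such that the induced subgraph G \ F is triangle-free. -/

import Mathlib

open SimpleGraph

variable {V : Type*}

/-- The vertices `a b c d e` induce a bull in `G` (edges ab, bc, cd, be, ce). -/
def IsBull (G : SimpleGraph V) (a b c d e : V) : Prop :=
  a ≠ b ∧ a ≠ c ∧ a ≠ d ∧ a ≠ e ∧ b ≠ c ∧ b ≠ d ∧ b ≠ e ∧ c ≠ d ∧ c ≠ e ∧ d ≠ e ∧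
  G.Adj a b ∧ G.Adj b c ∧ G.Adj c d ∧ G.Adj b e ∧ G.Adj c e ∧
  ¬ G.Adj a c ∧ ¬ G.Adj a d ∧ ¬ G.Adj a e ∧ ¬ G.Adj b d ∧ ¬ G.Adj d e

/-- `G` contains no induced bull. -/
def BullFree (G : SimpleGraph V) : Prop := ∀ a b c d e : V, ¬ IsBull G a b c d e

/-- `G` contains no induced path on six vertices. -/
def P6Free (G : SimpleGraph V) : Prop :=
  ¬ ∃ p : Fin 6 → V, Function.Injective p ∧
      ∀ i j : Fin 6, G.Adj (p i) (p j) ↔ (i.val + 1 = j.val ∨ j.val + 1 = i.val)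

/-- `c` lists the vertices of an induced 5-cycle in `G` (indices mod 5). -/
def IsInducedC5 (G : SimpleGraph V) (c : Fin 5 → V) : Prop :=
  Function.Injective c ∧ ∀ i j : Fin 5, G.Adj (c i) (c j) ↔ (j = i + 1 ∨ i = j + 1)

/-- `S` is a homogeneous set in `G`. -/
def IsHomogeneous (G : SimpleGraph V) (S : Set V) : Prop :=
  ∀ v ∉ S, (∀ s ∈ S, G.Adj v s) ∨ (∀ s ∈ S, ¬ G.Adj v s)

/-- `S` is a proper homogeneous set: homogeneous, of size at least two, not all of `V`. -/
def IsProperHomogeneous (G : SimpleGraph V) (S : Set V) : Prop :=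
  IsHomogeneous G S ∧ (∃ a ∈ S, ∃ b ∈ S, a ≠ b) ∧ S ≠ Set.univ

/-- A graph is prime if it has no proper homogeneous set. -/
def IsPrimeGraph (G : SimpleGraph V) : Prop := ¬ ∃ S : Set V, IsProperHomogeneous G S

/-- Number of neighbors of `x` on the 5-cycle `c`. -/
def nbrCount (G : SimpleGraph V) [DecidableRel G.Adj] (c : Fin 5 → V) (x : V) : ℕ :=
  (Finset.univ.filter fun i : Fin 5 => G.Adj x (c i)).card

/-!
Primeness and bull-freeness extend the 5-cycle `01234` to an induced *frame*: a vertex `z` that is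
adjacent to exactly `1` and `4`, with a pendant vertex `x` missing the cycle. Each vertex of `G` is
then described by its trace, the set of its neighbors on the frame. An induced bull or `P6` made of
a few vertices of `G` and some frame vertices is a finite condition on traces. In a prime graph,
every proper set of vertices that spans an edge (or a non-edge) has one that is split by a vertex
outside the set; applied to sets of vertices with the same trace, this rules out further traces.

The only traces that remain are the independent ones and `{1, 2, 3, 4}`. The vertices with trace
`{1, 2, 3, 4}` form the clique `F`. Adjacent vertices with independent traces have disjoint traces,
and in a triangle of such vertices any two traces are complete to each other and all three are
nonempty, which would give a triangle in the frame.
-/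

section TwinFree

variable {ι : Type*} {H : SimpleGraph ι} {G : SimpleGraph V}

/-- A graph is twin-free if distinct vertices have distinct (open) neighborhoods. For such an `H`,
any map that preserves and reflects adjacency is an induced embedding. -/
def IsTwinFree (H : SimpleGraph ι) : Prop := ∀ i j, (∀ k, H.Adj i k ↔ H.Adj j k) → i = j

theorem IsTwinFree.injective_of_adj_iff (hH : IsTwinFree H) {p : ι → V}
    (hp : ∀ i j, G.Adj (p i) (p j) ↔ H.Adj i j) : Function.Injective p := fun i j hij ↦
  hH i j fun k ↦ by rw [← hp, ← hp, hij]

/-- The induced embedding of a twin-free graph given by a map that preserves and reflects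
adjacency. -/
def IsTwinFree.embedding (hH : IsTwinFree H) (p : ι → V)
    (hp : ∀ i j, G.Adj (p i) (p j) ↔ H.Adj i j) : H ↪g G :=
  ⟨⟨p, hH.injective_of_adj_iff hp⟩, hp _ _⟩

/-- The embedding obtained from `f` by moving the image of `u` to a vertex `a` with the same
adjacencies to the other vertices of the copy of `H`. -/
def IsTwinFree.moveVertex [DecidableEq ι] (hH : IsTwinFree H) (f : H ↪g G) (u : ι) (a : V)
    (ha : ∀ i ≠ u, G.Adj a (f i) ↔ H.Adj u i) : H ↪g G :=
  hH.embedding (Function.update f u a) fun i j ↦ by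
    rcases eq_or_ne i u with rfl | hi <;> rcases eq_or_ne j i with rfl | hij
    · simp
    · simp [Function.update_of_ne hij, ha j hij]
    · simp
    · rcases eq_or_ne j u with rfl | hj
      · simp [Function.update_of_ne hi, G.adj_comm _ a, ha i hi, H.adj_comm i]
      · simp [Function.update_of_ne hi, Function.update_of_ne hj, f.map_adj_iff]

end TwinFree

section ForbiddenSubgraphs

variable {G : SimpleGraph V}

theorem BullFree.false_of_adj (hB : BullFree G) {a b c d e : V}
    (ab : G.Adj a b) (bc : G.Adj b c) (cd : G.Adj c d) (be : G.Adj b e) (ce : G.Adj c e)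
    (ac : ¬G.Adj a c) (ad : ¬G.Adj a d) (ae : ¬G.Adj a e) (bd : ¬G.Adj b d) (de : ¬G.Adj d e) :
    False := by
  refine hB a b c d e ⟨ab.ne, ?_, ?_, ?_, bc.ne, ?_, be.ne, cd.ne, ce.ne, ?_,
    ab, bc, cd, be, ce, ac, ad, ae, bd, de⟩ <;> rintro rfl <;> simp_all [G.adj_comm]

theorem P6Free.false_of_adj (hP : P6Free G) {a b c d e f : V}
    (ab : G.Adj a b) (bc : G.Adj b c) (cd : G.Adj c d) (de : G.Adj d e) (ef : G.Adj e f)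
    (ac : ¬G.Adj a c) (ad : ¬G.Adj a d) (ae : ¬G.Adj a e) (af : ¬G.Adj a f)
    (bd : ¬G.Adj b d) (be : ¬G.Adj b e) (bf : ¬G.Adj b f)
    (ce : ¬G.Adj c e) (cf : ¬G.Adj c f) (df : ¬G.Adj d f) : False := by
  have twinFree : IsTwinFree (pathGraph 6) := by
    simp only [IsTwinFree, pathGraph_adj]
    decide
  have adj_iff (i j : Fin 6) :
      G.Adj (![a, b, c, d, e, f] i) (![a, b, c, d, e, f] j) ↔ (pathGraph 6).Adj i j := by
    rw [pathGraph_adj]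
    fin_cases i <;> fin_cases j <;> simp [*, G.adj_comm]
  exact hP ⟨_, twinFree.injective_of_adj_iff adj_iff, fun i j ↦ by rw [adj_iff, pathGraph_adj]⟩

theorem BullFree.compl (hB : BullFree G) : BullFree Gᶜ := by
  rintro a b c d e ⟨-, hac, had, hae, -, hbd, -, -, -, hde, ab, bc, cd, be, ce, ac, ad, ae, bd, de⟩
  simp only [compl_adj, not_and, not_not] at ab bc cd be ce ac ad ae bd de
  exact hB.false_of_adj (ac hac).symm (ad had) (bd hbd).symm (ae hae) (de hde)
    cd.2 (fun h ↦ bc.2 h.symm) ce.2 ab.2 be.2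

end ForbiddenSubgraphs

section Prime

variable {G : SimpleGraph V}

theorem IsPrimeGraph.compl (hPr : IsPrimeGraph G) : IsPrimeGraph Gᶜ := by
  rintro ⟨S, hS, hne, huniv⟩
  refine hPr ⟨S, fun v hv ↦ ?_, hne, huniv⟩
  have adj_iff (s : V) (hs : s ∈ S) : Gᶜ.Adj v s ↔ ¬G.Adj v s := by
    simp [compl_adj, (ne_of_mem_of_not_mem hs hv).symm]
  refine (hS v hv).symm.imp (fun h s hs ↦ ?_) fun h s hs ↦ (adj_iff s hs).1 (h s hs)
  exact not_not.1 fun hvs ↦ h s hs ((adj_iff s hs).2 hvs)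

theorem IsPrimeGraph.exists_adj_split (hPr : IsPrimeGraph G) {R : Set V} (hR : R ≠ Set.univ)
    {u v : V} (hu : u ∈ R) (hv : v ∈ R) (huv : G.Adj u v) :
    ∃ a ∈ R, ∃ b ∈ R, G.Adj a b ∧ ∃ w ∉ R, G.Adj w a ∧ ¬G.Adj w b := by
  by_contra! no_split
  -- The connected component of `u` in `G[R]` is homogeneous unless some edge of it is split.
  let S : Set V := {s | Relation.ReflTransGen (fun a b ↦ G.Adj a b ∧ b ∈ R) u s}
  have hSR : S ⊆ R := fun s hs ↦ by
    rcases Relation.ReflTransGen.cases_tail hs with rfl | ⟨t, -, -, hsR⟩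
    exacts [hu, hsR]
  have hvS : v ∈ S := .single ⟨huv, hv⟩
  have adj_iff (w : V) (hw : w ∉ R) (s : V) (hs : s ∈ S) : G.Adj w u ↔ G.Adj w s := by
    induction hs with
    | refl => rfl
    | tail hs ht ih =>
      exact ih.trans ⟨no_split _ (hSR hs) _ ht.2 ht.1 w hw,
        no_split _ ht.2 _ (hSR hs) ht.1.symm w hw⟩
  refine hPr ⟨S, fun w hw ↦ ?_, ⟨u, .refl, v, hvS, huv.ne⟩, fun h ↦ hR ?_⟩
  · by_cases hwR : w ∈ R
    · exact .inr fun s hs hws ↦ hw (Relation.ReflTransGen.tail hs ⟨hws.symm, hwR⟩)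
    · by_cases hwu : G.Adj w u
      · exact .inl fun s hs ↦ (adj_iff w hwR s hs).1 hwu
      · exact .inr fun s hs hws ↦ hwu ((adj_iff w hwR s hs).2 hws)
  · exact Set.eq_univ_of_univ_subset (h ▸ hSR)

theorem IsPrimeGraph.exists_not_adj_split (hPr : IsPrimeGraph G) {R : Set V} (hR : R ≠ Set.univ)
    {u v : V} (hu : u ∈ R) (hv : v ∈ R) (huv : u ≠ v) (hnuv : ¬G.Adj u v) :
    ∃ a ∈ R, ∃ b ∈ R, a ≠ b ∧ ¬G.Adj a b ∧ ∃ w ∉ R, G.Adj w a ∧ ¬G.Adj w b := by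
  obtain ⟨b, hb, a, ha, hba, w, hw, hwb, hwa⟩ :=
    hPr.compl.exists_adj_split hR hu hv ⟨huv, hnuv⟩
  rw [compl_adj] at hba hwb hwa
  refine ⟨a, ha, b, hb, hba.1.symm, fun h ↦ hba.2 h.symm, w, hw, ?_, hwb.2⟩
  exact not_not.1 fun h ↦ hwa ⟨(ne_of_mem_of_not_mem ha hw).symm, h⟩

end Prime

section Attachment

variable {ι : Type*} {H : SimpleGraph ι} {G : SimpleGraph V}

theorem exists_adj_boundary (hH : H.Preconnected) {P : ι → Prop} {i j : ι}
    (hi : P i) (hj : ¬P j) : ∃ i j, H.Adj i j ∧ P i ∧ ¬P j := by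
  obtain ⟨p⟩ := hH i j
  obtain ⟨d, -, hd⟩ := p.exists_boundary_dart {k | P k} hi hj
  exact ⟨d.fst, d.snd, d.adj, hd⟩

/-- `v` is anticomplete to the copy of `H` given by `f`: it lies off the copy and has no neighbor
on it. -/
def IsAnticompleteTo (f : H ↪g G) (v : V) : Prop := ∀ i, ¬G.Adj v (f i) ∧ f i ≠ v

theorem BullFree.exists_adj_anticomplete_mixed (hB : BullFree G) (hPr : IsPrimeGraph G)
    (hH : H.Preconnected) (hH' : H ≠ ⊤) (f : H ↪g G) {v : V} (hv : IsAnticompleteTo f v) :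
    ∃ x, IsAnticompleteTo f x ∧ ∃ z, G.Adj z x ∧ (∃ i, G.Adj z (f i)) ∧ ∃ j, ¬G.Adj z (f j) := by
  let R : Set V := {u | ¬IsAnticompleteTo f u ∧ ∀ x, IsAnticompleteTo f x → ¬G.Adj u x}
  have hfR (i : ι) : f i ∈ R := ⟨fun h ↦ (h i).2 rfl, fun x hx h ↦ (hx i).1 h.symm⟩
  obtain ⟨i, j, hij, hnij⟩ := ne_top_iff_exists_not_adj.1 hH'
  have hR : R ≠ Set.univ := (Set.ne_univ_iff_exists_notMem R).2 ⟨v, fun h ↦ h.1 hv⟩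
  obtain ⟨a, ha, b, hb, -, hab, w, hw, hwa, hwb⟩ := hPr.exists_not_adj_split hR (hfR i) (hfR j)
    (f.injective.ne hij) (mt f.map_adj_iff.1 hnij)
  have hw_not : ¬IsAnticompleteTo f w := fun h ↦ ha.2 w h hwa.symm
  obtain ⟨x, hx, hwx⟩ : ∃ x, IsAnticompleteTo f x ∧ G.Adj w x := by
    by_contra! h
    exact hw ⟨hw_not, h⟩
  have meets {u : V} (hu : ¬IsAnticompleteTo f u) (hu' : ∀ i, f i ≠ u) : ∃ i, G.Adj u (f i) := by
    by_contra! h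
    exact hu fun i ↦ ⟨h i, hu' i⟩
  refine ⟨x, hx, w, hwx, meets hw_not fun i h ↦ hw (h ▸ hfR i), ?_⟩
  by_contra! hwf
  obtain ⟨j, hbj⟩ := meets hb.1 fun i h ↦ hwb (h ▸ hwf i)
  by_cases hbf : ∀ i, G.Adj b (f i)
  · obtain ⟨i, hai⟩ := meets ha.1 fun i h ↦ hab (h ▸ (hbf i).symm)
    exact hB.false_of_adj hwx.symm (hwf i) (hbf i).symm hwa hai.symm (hx i).1
      (fun h ↦ hb.2 x hx h.symm) (fun h ↦ ha.2 x hx h.symm) hwb fun h ↦ hab h.symm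
  · obtain ⟨k, hbk⟩ := not_forall.1 hbf
    obtain ⟨i, j, hij, hbi, hbj⟩ :=
      exists_adj_boundary hH (P := fun i ↦ G.Adj b (f i)) hbj hbk
    exact hB.false_of_adj hwx.symm (hwf i) hbi.symm (hwf j) (f.map_adj_iff.2 hij) (hx i).1
      (fun h ↦ hb.2 x hx h.symm) (hx j).1 hwb hbj

theorem BullFree.exists_not_adj_complete_mixed (hB : BullFree G) (hPr : IsPrimeGraph G)
    (hH : Hᶜ.Preconnected) (hH' : H ≠ ⊥) (f : H ↪g G) {v : V} (hv : ∀ i, G.Adj v (f i)) :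
    ∃ y, (∀ i, G.Adj y (f i)) ∧ ∃ z, ¬G.Adj z y ∧
      (∃ i, G.Adj z (f i)) ∧ ∃ j, ¬G.Adj z (f j) := by
  have anticomplete_iff (u : V) :
      IsAnticompleteTo (Embedding.complEquiv f) u ↔ ∀ i, G.Adj u (f i) := by
    refine forall_congr' fun i ↦ ?_
    change ¬Gᶜ.Adj u (f i) ∧ f i ≠ u ↔ G.Adj u (f i)
    have := G.ne_of_adj (a := u) (b := f i)
    grind [compl_adj]
  obtain ⟨y, hy, z, hzy, ⟨j, hzj⟩, i, hzi⟩ := hB.compl.exists_adj_anticomplete_mixed hPr.compl hH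
    (by simpa using hH') (Embedding.complEquiv f) ((anticomplete_iff v).2 hv)
  rw [anticomplete_iff] at hy
  refine ⟨y, hy, z, hzy.2, ⟨i, ?_⟩, j, hzj.2⟩
  by_contra h
  refine hzi ⟨?_, h⟩
  rintro rfl
  exact hzy.2 (hy i).symm

end Attachment

section Trace

variable {ι : Type*} [Fintype ι] {H : SimpleGraph ι} {G : SimpleGraph V}

open Classical in
/-- The trace of a vertex `v` on the copy of `H` given by `f`: the set of vertices of `H` whose
images are adjacent to `v`. -/
noncomputable def trace (f : H ↪g G) (v : V) : Finset ι := {i | G.Adj v (f i)}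

@[simp]
theorem mem_trace {f : H ↪g G} {v : V} {i : ι} : i ∈ trace f v ↔ G.Adj v (f i) := by
  simp [trace]

@[simp]
theorem trace_apply [DecidableRel H.Adj] (f : H ↪g G) (i : ι) :
    trace f (f i) = H.neighborFinset i := by
  ext j
  simp

end Trace

section Obstructions

variable {ι : Type*}

/-- The condition on the traces `A`, `B` of two adjacent vertices `a`, `b` that no bull consists of
`a`, `b` and images of `k`, `h`, `m`, with triangle `a`, `b`, `h` and pendant edges `bk`, `hm`. -/
def EdgeCompatible (H : SimpleGraph ι) (A B : Finset ι) : Prop :=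
  ∀ h ∈ A, h ∈ B → ∀ k ∈ B, k ∉ A → ¬H.Adj h k → ∀ m, H.Adj h m → m ∉ A → m ∉ B → H.Adj k m

/-- The condition on the traces `A`, `B`, `W` of vertices `a`, `b`, `w`, of which exactly `ab` and
`aw` are edges, that no bull consists of `a`, `b`, `w` and images of `h`, `m`, with triangle
`a`, `b`, `h` and pendant edges `aw`, `hm`. -/
def SplitCompatible (H : SimpleGraph ι) (A B W : Finset ι) : Prop :=
  ∀ h ∈ A, h ∈ B → h ∉ W → ∀ m, H.Adj h m → m ∉ A → m ∉ B → m ∈ W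

/-- The condition on the traces `X`, `Y`, `Z` of the vertices of an induced path `xyz` that it does
not extend at `z` to an induced `P6` by images of `p`, `q`, `r`. -/
def PathCompatible (H : SimpleGraph ι) (X Y Z : Finset ι) : Prop :=
  ∀ p ∈ Z, p ∉ X → p ∉ Y → ∀ q, H.Adj p q → q ∉ X → q ∉ Y → q ∉ Z →
    ∀ r, H.Adj q r → r ≠ p → r ∉ X → r ∉ Y → r ∉ Z → H.Adj p r

/-- The condition on the common trace `T` of two nonadjacent vertices `a`, `b` and the trace `N` of
a vertex `w` adjacent to `b` but not to `a` that no induced `P6` of the form `m h w b k a` exists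
with `m`, `h`, `k` in the copy of `H`. -/
def TwinCompatible (H : SimpleGraph ι) (T N : Finset ι) : Prop :=
  ∀ h ∈ N, h ∉ T → ∀ k ∈ T, k ∉ N → ∀ m, H.Adj m h → m ∉ T → m ∉ N → H.Adj h k ∨ H.Adj m k

section Decidable

variable [Fintype ι] [DecidableEq ι] {H : SimpleGraph ι} [DecidableRel H.Adj]

instance (A B : Finset ι) : Decidable (EdgeCompatible H A B) := by
  unfold EdgeCompatible; infer_instance

instance (A B W : Finset ι) : Decidable (SplitCompatible H A B W) := by
  unfold SplitCompatible; infer_instance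

instance (X Y Z : Finset ι) : Decidable (PathCompatible H X Y Z) := by
  unfold PathCompatible; infer_instance

instance (T N : Finset ι) : Decidable (TwinCompatible H T N) := by
  unfold TwinCompatible; infer_instance

end Decidable

section Trace

variable [Fintype ι] {H : SimpleGraph ι} {G : SimpleGraph V}

theorem BullFree.edgeCompatible (hB : BullFree G) (f : H ↪g G) {a b : V} (hab : G.Adj a b) :
    EdgeCompatible H (trace f a) (trace f b) := by
  intro h hhA hhB k hkB hkA hhk m hhm hmA hmB
  rw [mem_trace] at hhA hhB hkB hkA hmA hmB
  by_contra hkm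
  exact hB.false_of_adj hkB.symm hhB (f.map_adj_iff.2 hhm) hab.symm hhA.symm
    (mt f.map_adj_iff.1 fun e ↦ hhk e.symm) (mt f.map_adj_iff.1 hkm) (fun e ↦ hkA e.symm) hmB
    fun e ↦ hmA e.symm

theorem BullFree.splitCompatible (hB : BullFree G) (f : H ↪g G) {a b w : V} (hab : G.Adj a b)
    (hwa : G.Adj w a) (hwb : ¬G.Adj w b) :
    SplitCompatible H (trace f a) (trace f b) (trace f w) := by
  intro h hhA hhB hhW m hhm hmA hmB
  rw [mem_trace] at *
  by_contra hmW
  exact hB.false_of_adj hwa hhA (f.map_adj_iff.2 hhm) hab hhB.symm hhW hmW hwb hmA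
    fun e ↦ hmB e.symm

theorem P6Free.pathCompatible (hP : P6Free G) (f : H ↪g G) {x y z : V} (hxy : G.Adj x y)
    (hyz : G.Adj y z) (hxz : ¬G.Adj x z) :
    PathCompatible H (trace f x) (trace f y) (trace f z) := by
  intro p hpZ hpX hpY q hpq hqX hqY hqZ r hqr hrp hrX hrY hrZ
  rw [mem_trace] at *
  by_contra hpr
  exact hP.false_of_adj hxy hyz hpZ (f.map_adj_iff.2 hpq) (f.map_adj_iff.2 hqr) hxz hpX hqX hrX
    hpY hqY hrY hqZ hrZ (mt f.map_adj_iff.1 hpr)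

theorem P6Free.twinCompatible (hP : P6Free G) (f : H ↪g G) {a b w : V}
    (hab : trace f a = trace f b) (hnab : ¬G.Adj a b) (hwa : ¬G.Adj w a) (hwb : G.Adj w b) :
    TwinCompatible H (trace f b) (trace f w) := by
  intro h hhW hhB k hkB hkW m hmh hmB hmW
  have hhA := hab ▸ hhB
  have hkA := hab ▸ hkB
  have hmA := hab ▸ hmB
  rw [mem_trace] at *
  by_contra! hk
  exact hP.false_of_adj (f.map_adj_iff.2 hmh) hhW.symm hwb hkB hkA.symm
    (fun e ↦ hmW e.symm) (fun e ↦ hmB e.symm) (mt f.map_adj_iff.1 hk.2) (fun e ↦ hmA e.symm)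
    (fun e ↦ hhB e.symm) (mt f.map_adj_iff.1 hk.1) (fun e ↦ hhA e.symm) hkW hwa fun e ↦ hnab e.symm

theorem BullFree.adj_or_adj_of_complete (hB : BullFree G) (f : H ↪g G) {y z : V}
    (hy : ∀ i, G.Adj y (f i)) (hyz : ¬G.Adj y z) :
    ∀ h ∈ trace f z, ∀ k ∉ trace f z, H.Adj h k → ∀ m ∉ trace f z,
      H.Adj m h ∨ H.Adj m k := by
  intro h hh k hk hhk m hm
  rw [mem_trace] at *
  by_contra! hmhk
  exact hB.false_of_adj (hy m).symm (hy h) hh.symm (hy k) (f.map_adj_iff.2 hhk)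
    (mt f.map_adj_iff.1 hmhk.1) (fun e ↦ hm e.symm) (mt f.map_adj_iff.1 hmhk.2) hyz hk

theorem BullFree.adj_of_mem_trace (hB : BullFree G) (f : H ↪g G) {a b c : V}
    (hab : G.Adj a b) (hac : G.Adj a c) (hbc : G.Adj b c)
    (dab : Disjoint (trace f a) (trace f b)) (dac : Disjoint (trace f a) (trace f c))
    (dbc : Disjoint (trace f b) (trace f c)) {h k : ι} (hh : h ∈ trace f a)
    (hk : k ∈ trace f b) : H.Adj h k := by
  have hhb := Finset.disjoint_left.1 dab hh
  have hhc := Finset.disjoint_left.1 dac hh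
  have hka := Finset.disjoint_right.1 dab hk
  have hkc := Finset.disjoint_left.1 dbc hk
  rw [mem_trace] at *
  by_contra hhk
  exact hB.false_of_adj hh.symm hab hk hac hbc (fun e ↦ hhb e.symm) (mt f.map_adj_iff.1 hhk)
    (fun e ↦ hhc e.symm) hka fun e ↦ hkc e.symm

end Trace

variable [Fintype ι] {G : SimpleGraph V}

/-- The conditions on the trace `N` of a single vertex that edge and path compatibility impose when
all other vertices involved belong to the copy of `H`. -/
def IsAdmissible (H : SimpleGraph ι) [DecidableRel H.Adj] (N : Finset ι) : Prop :=
  (∀ k ∈ N, EdgeCompatible H N (H.neighborFinset k) ∧ EdgeCompatible H (H.neighborFinset k) N) ∧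
  (∀ k ∈ N, ∀ l ∈ N, ¬H.Adj k l →
    PathCompatible H (H.neighborFinset k) N (H.neighborFinset l)) ∧
  ∀ k ∈ N, ∀ l, H.Adj k l → l ∉ N →
    PathCompatible H N (H.neighborFinset k) (H.neighborFinset l)

set_option synthInstance.maxSize 1000 in
instance [DecidableEq ι] (H : SimpleGraph ι) [DecidableRel H.Adj] (N : Finset ι) :
    Decidable (IsAdmissible H N) := by
  unfold IsAdmissible; infer_instance

theorem isAdmissible_trace {H : SimpleGraph ι} [DecidableRel H.Adj] (hP : P6Free G)
    (hB : BullFree G) (f : H ↪g G) (v : V) : IsAdmissible H (trace f v) := by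
  refine ⟨fun k hk ↦ ?_, fun k hk l hl hkl ↦ ?_, fun k hk l hkl hl ↦ ?_⟩ <;>
    rw [mem_trace] at * <;> simp only [← trace_apply f]
  · exact ⟨hB.edgeCompatible f hk, hB.edgeCompatible f hk.symm⟩
  · exact hP.pathCompatible f hk.symm hl (mt f.map_adj_iff.1 hkl)
  · exact hP.pathCompatible f hk (f.map_adj_iff.2 hkl) hl

end Obstructions

section Frame

variable {G : SimpleGraph V}

/-- The 5-cycle `01234` together with a vertex `5` adjacent to `1` and `4` and a pendant vertex `6`
adjacent to `5`. -/
def frame : SimpleGraph (Fin 7) where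
  Adj i j := j ∈ (![[1, 4], [0, 2, 5], [1, 3], [2, 4], [0, 3, 5], [1, 4, 6], [5]] i : List (Fin 7))
  symm := ⟨by decide⟩
  loopless := ⟨by decide⟩

instance : DecidableRel frame.Adj := fun _ _ ↦ inferInstanceAs (Decidable (_ ∈ _))

theorem isTwinFree_frame : IsTwinFree frame := by
  unfold IsTwinFree
  decide

/-- Rotation of the 5-cycle. -/
def rotateC5 (i : Fin 5) : cycleGraph 5 ≃g cycleGraph 5 where
  toEquiv := Equiv.addLeft i
  map_rel_iff' := by simp [cycleGraph_adj]

/-- The induced embedding of the 5-cycle that lists the vertices `c 0, …, c 4`. -/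
def IsInducedC5.embedding {c : Fin 5 → V} (hc : IsInducedC5 G c) : cycleGraph 5 ↪g G where
  toFun := c
  inj' := hc.1
  map_rel_iff' {i j} := by
    change G.Adj (c i) (c j) ↔ _
    rw [hc.2, cycleGraph_adj, sub_eq_iff_eq_add, sub_eq_iff_eq_add, add_comm 1, add_comm 1, or_comm]

theorem eq_pair_of_compatible : ∀ N : Finset (Fin 5), N.Nonempty → N ≠ Finset.univ →
    (∀ k ∈ N, SplitCompatible (cycleGraph 5) N ((cycleGraph 5).neighborFinset k) ∅) →
    (∀ k ∈ N, PathCompatible (cycleGraph 5) ∅ N ((cycleGraph 5).neighborFinset k)) →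
    ∃ i, N = {i + 1, i + 4} := by
  decide +kernel

theorem exists_frame (hP : P6Free G) (hB : BullFree G) (hPr : IsPrimeGraph G)
    (c : cycleGraph 5 ↪g G) {v : V} (hv : IsAnticompleteTo c v) : Nonempty (frame ↪g G) := by
  obtain ⟨x, hx, z, hzx, ⟨j, hzj⟩, k, hzk⟩ :=
    hB.exists_adj_anticomplete_mixed hPr cycleGraph_preconnected
      (ne_top_iff_exists_not_adj.2 ⟨0, 2, by decide⟩) c hv
  have hx_trace : trace c x = ∅ := by simp [Finset.eq_empty_iff_forall_notMem, hx _]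
  obtain ⟨i, hi⟩ : ∃ i, trace c z = {i + 1, i + 4} := by
    refine eq_pair_of_compatible _ ⟨j, mem_trace.2 hzj⟩
      (fun h ↦ hzk (mem_trace.1 (h ▸ Finset.mem_univ k))) (fun k hk ↦ ?_) fun k hk ↦ ?_
    · simpa [hx_trace] using hB.splitCompatible c (mem_trace.1 hk) hzx.symm (hx k).1
    · simpa [hx_trace] using hP.pathCompatible c hzx.symm (mem_trace.1 hk) (hx k).1
  let g : cycleGraph 5 ↪g G := c.comp (rotateC5 i).toEmbedding
  have hgg (j k : Fin 5) : G.Adj (g j) (g k) ↔ j = k + 1 ∨ k = j + 1 := by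
    rw [g.map_adj_iff, cycleGraph_adj, sub_eq_iff_eq_add', sub_eq_iff_eq_add']
  have hxg (j : Fin 5) : ¬G.Adj x (g j) := (hx _).1
  have hzg (j : Fin 5) : G.Adj z (g j) ↔ j = 1 ∨ j = 4 := by
    change G.Adj z (c (i + j)) ↔ _
    rw [← mem_trace, hi]
    simp
  have hgx (j : Fin 5) : ¬G.Adj (g j) x := fun h ↦ hxg j h.symm
  have hgz (j : Fin 5) : G.Adj (g j) z ↔ j = 1 ∨ j = 4 := (G.adj_comm _ _).trans (hzg j)
  refine ⟨isTwinFree_frame.embedding ![g 0, g 1, g 2, g 3, g 4, z, x] fun i j ↦ ?_⟩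
  fin_cases i <;> fin_cases j <;>
    simp [-Embedding.map_adj_iff, hgg, hxg, hzg, hgx, hgz, hzx, hzx.symm, frame]

/-- The trace on `frame` of the vertices that make up the clique to be removed. -/
def cliqueTrace : Finset (Fin 7) := {1, 2, 3, 4}

theorem IsAdmissible.frame_cases : ∀ {N : Finset (Fin 7)}, IsAdmissible frame N →
    frame.IsIndepSet N ∨ N = cliqueTrace ∨ N = Finset.univ ∨
      ∃ u, N = insert u (frame.neighborFinset u) := by
  decide +kernel

theorem IsAdmissible.eq_empty_or_eq_univ : ∀ {N : Finset (Fin 7)}, IsAdmissible frame N →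
    (∀ h ∈ N, ∀ k ∉ N, frame.Adj h k → ∀ m ∉ N, frame.Adj m h ∨ frame.Adj m k) →
    N = ∅ ∨ N = Finset.univ := by
  decide +kernel

theorem trace_ne_univ (hP : P6Free G) (hB : BullFree G) (hPr : IsPrimeGraph G) (f : frame ↪g G)
    (v : V) : trace f v ≠ Finset.univ := by
  intro hv
  obtain ⟨y, hy, z, hzy, ⟨i, hi⟩, j, hj⟩ := hB.exists_not_adj_complete_mixed hPr (by decide)
    (ne_bot_iff_exists_adj.2 ⟨0, 1, by decide⟩) f (v := v) fun i ↦
      mem_trace.1 (hv ▸ Finset.mem_univ i)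
  rw [← mem_trace] at hi hj
  rcases (isAdmissible_trace hP hB f z).eq_empty_or_eq_univ
    (hB.adj_or_adj_of_complete f hy fun h ↦ hzy h.symm) with h | h
  · simp [h] at hi
  · simp [h] at hj

theorem eq_insert_neighborFinset_of_compatible : ∀ u : Fin 7, ∀ N : Finset (Fin 7), u ∈ N →
    N ≠ Finset.univ → IsAdmissible frame N →
    SplitCompatible frame (frame.neighborFinset u) (insert u (frame.neighborFinset u)) N →
    PathCompatible frame (insert u (frame.neighborFinset u)) (frame.neighborFinset u) N →
    N = insert u (frame.neighborFinset u) := by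
  decide +kernel

theorem trace_eq_insert_of_split (hP : P6Free G) (hB : BullFree G) (hPr : IsPrimeGraph G)
    (f : frame ↪g G) {u : Fin 7} {v w : V} (hv : trace f v = insert u (frame.neighborFinset u))
    (hwu : G.Adj w (f u)) (hwv : ¬G.Adj w v) :
    trace f w = insert u (frame.neighborFinset u) := by
  have huv : G.Adj (f u) v := (mem_trace.1 (hv ▸ Finset.mem_insert_self u _)).symm
  refine eq_insert_neighborFinset_of_compatible u _ (mem_trace.2 hwu) (trace_ne_univ hP hB hPr f w)
    (isAdmissible_trace hP hB f w) ?_ ?_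
  · simpa only [hv, trace_apply] using hB.splitCompatible f huv hwu hwv
  · simpa only [hv, trace_apply] using
      hP.pathCompatible f huv.symm hwu.symm fun h ↦ hwv h.symm

theorem exists_adj_frame : ∀ u, ∃ k, frame.Adj u k := by
  decide

theorem trace_ne_insert_neighborFinset (hP : P6Free G) (hB : BullFree G) (hPr : IsPrimeGraph G)
    (f : frame ↪g G) (v : V) (u : Fin 7) : trace f v ≠ insert u (frame.neighborFinset u) := by
  intro hv
  have hv_adj (i : Fin 7) : G.Adj v (f i) ↔ i = u ∨ frame.Adj u i := by
    simp [← mem_trace, hv]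
  let R : Set V := {a | ∀ i ≠ u, G.Adj a (f i) ↔ frame.Adj u i}
  have hu : f u ∈ R := fun i _ ↦ f.map_adj_iff
  have hvR : v ∈ R := fun i hi ↦ by simp [hv_adj, hi]
  have hR : R ≠ Set.univ := by
    obtain ⟨k, huk⟩ : ∃ k, frame.Adj u k := exists_adj_frame u
    refine (Set.ne_univ_iff_exists_notMem R).2 ⟨f k, fun h ↦ ?_⟩
    exact G.irrefl ((h k huk.ne').2 huk)
  obtain ⟨a, ha, b, hb, hab, w, hwR, hwa, hwb⟩ :=
    hPr.exists_adj_split hR hu hvR ((hv_adj u).2 (.inl rfl)).symm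
  let g : frame ↪g G := isTwinFree_frame.moveVertex f u a ha
  have hgu : g u = a := Function.update_self ..
  have hg {i : Fin 7} (hi : i ≠ u) : g i = f i := Function.update_of_ne hi ..
  have hb_trace : trace g b = insert u (frame.neighborFinset u) := by
    ext i
    rcases eq_or_ne i u with rfl | hi
    · simp [hgu, hab.symm]
    · simp [hg hi, hb i hi, hi]
  have hw_trace := trace_eq_insert_of_split hP hB hPr g hb_trace (hgu ▸ hwa) hwb
  refine hwR fun i hi ↦ ?_
  rw [← hg hi, ← mem_trace, hw_trace]
  simp [hi]

theorem isIndepSet_trace_or_eq_cliqueTrace (hP : P6Free G) (hB : BullFree G)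
    (hPr : IsPrimeGraph G) (f : frame ↪g G) (v : V) :
    frame.IsIndepSet (trace f v) ∨ trace f v = cliqueTrace := by
  rcases (isAdmissible_trace hP hB f v).frame_cases with h | h | h | ⟨u, h⟩
  · exact .inl h
  · exact .inr h
  · exact absurd h (trace_ne_univ hP hB hPr f v)
  · exact absurd h (trace_ne_insert_neighborFinset hP hB hPr f v u)

theorem not_compatible_cliqueTrace : ∀ N : Finset (Fin 7), frame.IsIndepSet N →
    EdgeCompatible frame N cliqueTrace →
    (∀ k ∈ cliqueTrace, k ∉ N →
      SplitCompatible frame cliqueTrace (frame.neighborFinset k) N) →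
    (∀ h ∈ cliqueTrace, h ∈ N → SplitCompatible frame (frame.neighborFinset h) cliqueTrace N) →
    ¬TwinCompatible frame cliqueTrace N := by
  decide +kernel

theorem isClique_trace_eq_cliqueTrace (hP : P6Free G) (hB : BullFree G) (hPr : IsPrimeGraph G)
    (f : frame ↪g G) : G.IsClique {v | trace f v = cliqueTrace} := by
  intro u hu v hv huv
  by_contra hnuv
  have hR : {v | trace f v = cliqueTrace} ≠ Set.univ :=
    (Set.ne_univ_iff_exists_notMem _).2 ⟨f 0, by rw [Set.mem_ofPred_eq, trace_apply]; decide⟩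
  obtain ⟨b, hb, a, ha, -, hba, w, hw, hwb, hwa⟩ := hPr.exists_not_adj_split hR hu hv huv hnuv
  rw [Set.mem_ofPred_eq] at ha hb hw
  refine not_compatible_cliqueTrace _
    ((isIndepSet_trace_or_eq_cliqueTrace hP hB hPr f w).resolve_right hw) ?_
    (fun k hkb hkw ↦ ?_) (fun h hha hhw ↦ ?_) ?_
  · exact hb ▸ hB.edgeCompatible f hwb
  · rw [← hb, ← trace_apply f]
    exact hB.splitCompatible f (mem_trace.1 (hb ▸ hkb)) hwb (mt mem_trace.2 hkw)
  · rw [← ha, ← trace_apply f]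
    exact hB.splitCompatible f (mem_trace.1 (ha ▸ hha)).symm (mem_trace.1 hhw) hwa
  · exact hb ▸ hP.twinCompatible f (ha.trans hb.symm) (fun e ↦ hba e.symm) hwa hwb

theorem not_pathCompatible_of_ne : ∀ T : Finset (Fin 7), frame.IsIndepSet T →
    ∀ N : Finset (Fin 7), N ≠ T → frame.IsIndepSet N ∨ N = cliqueTrace →
    EdgeCompatible frame T N → SplitCompatible frame T T N → ¬PathCompatible frame T T N := by
  decide +kernel

theorem trace_ne_of_adj (hP : P6Free G) (hB : BullFree G) (hPr : IsPrimeGraph G)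
    (f : frame ↪g G) {a b : V} (hab : G.Adj a b) (ha : frame.IsIndepSet (trace f a)) :
    trace f a ≠ trace f b := by
  intro h
  let R : Set V := {v | trace f v = trace f a}
  have hR : R ≠ Set.univ := by
    refine (Set.ne_univ_iff_exists_notMem R).2 ?_
    by_contra! hall
    have h01 : trace f (f 0) = trace f (f 1) := (hall _).trans (hall _).symm
    rw [trace_apply, trace_apply] at h01
    exact absurd h01 (by decide)
  obtain ⟨c, hc, d, hd, hcd, w, hw, hwc, hwd⟩ := hPr.exists_adj_split hR rfl h.symm hab
  rw [Set.mem_ofPred_eq] at hc hd hw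
  refine not_pathCompatible_of_ne _ ha (trace f w) hw
    (isIndepSet_trace_or_eq_cliqueTrace hP hB hPr f w) ?_ ?_ ?_
  · exact hc ▸ hB.edgeCompatible f hwc.symm
  · simpa only [hc, hd] using hB.splitCompatible f hcd hwc hwd
  · simpa only [hc, hd] using hP.pathCompatible f hcd.symm hwc.symm fun e ↦ hwd e.symm

set_option synthInstance.maxSize 1000 in
theorem disjoint_of_compatible : ∀ A : Finset (Fin 7), frame.IsIndepSet A →
    IsAdmissible frame A → ∀ B : Finset (Fin 7), frame.IsIndepSet B → A ≠ B →
    EdgeCompatible frame A B → EdgeCompatible frame B A →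
    (∀ l ∈ B, l ∉ A → PathCompatible frame A B (frame.neighborFinset l)) →
    (∀ l ∈ A, l ∉ B → PathCompatible frame B A (frame.neighborFinset l)) →
    IsAdmissible frame B → Disjoint A B := by
  decide +kernel

theorem disjoint_trace_of_adj (hP : P6Free G) (hB : BullFree G) (hPr : IsPrimeGraph G)
    (f : frame ↪g G) {a b : V} (hab : G.Adj a b) (ha : frame.IsIndepSet (trace f a))
    (hb : frame.IsIndepSet (trace f b)) : Disjoint (trace f a) (trace f b) := by
  have pathCompatible {x y : V} (hxy : G.Adj x y) (l : Fin 7) (hly : l ∈ trace f y)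
      (hlx : l ∉ trace f x) :
      PathCompatible frame (trace f x) (trace f y) (frame.neighborFinset l) := by
    rw [← trace_apply f]
    exact hP.pathCompatible f hxy (mem_trace.1 hly) (mt mem_trace.2 hlx)
  exact disjoint_of_compatible _ ha (isAdmissible_trace hP hB f a) _ hb
    (trace_ne_of_adj hP hB hPr f hab ha) (hB.edgeCompatible f hab) (hB.edgeCompatible f hab.symm)
    (pathCompatible hab) (pathCompatible hab.symm) (isAdmissible_trace hP hB f b)

set_option synthInstance.maxSize 1000 in
theorem not_pathCompatible_of_complete : ∀ A : Finset (Fin 7), A.Nonempty →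
    (∀ h ∈ A, PathCompatible frame ∅ A (frame.neighborFinset h)) →
    ∀ B : Finset (Fin 7), B.Nonempty → (∀ h ∈ A, ∀ k ∈ B, frame.Adj h k) →
    ¬∀ k ∈ B, PathCompatible frame ∅ B (frame.neighborFinset k) := by
  decide +kernel

theorem trace_nonempty_of_complete (hP : P6Free G) (hB : BullFree G) (hPr : IsPrimeGraph G)
    (f : frame ↪g G) {a b d : V} (had : G.Adj a d) (hbd : G.Adj b d)
    (hcomplete : ∀ h ∈ trace f a, ∀ k ∈ trace f b, frame.Adj h k) : (trace f d).Nonempty := by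
  rw [Finset.nonempty_iff_ne_empty]
  intro hd
  have hd_indep : frame.IsIndepSet (trace f d) := by simp [hd]
  have nonempty {v : V} (hv : G.Adj v d) : (trace f v).Nonempty := by
    rw [Finset.nonempty_iff_ne_empty, ← hd]
    exact (trace_ne_of_adj hP hB hPr f hv.symm hd_indep).symm
  have pathCompatible {v : V} (hv : G.Adj v d) (k : Fin 7) (hk : k ∈ trace f v) :
      PathCompatible frame ∅ (trace f v) (frame.neighborFinset k) := by
    rw [← trace_apply f, ← hd]
    exact hP.pathCompatible f hv.symm (mem_trace.1 hk) (mt mem_trace.2 (by simp [hd]))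
  exact not_pathCompatible_of_complete _ (nonempty had) (pathCompatible had) _ (nonempty hbd)
    hcomplete (pathCompatible hbd)

theorem frame_cliqueFree_three : frame.CliqueFree 3 := by
  unfold CliqueFree
  decide +kernel

theorem not_triangle_of_isIndepSet_trace (hP : P6Free G) (hB : BullFree G) (hPr : IsPrimeGraph G)
    (f : frame ↪g G) {a b c : V} (ha : frame.IsIndepSet (trace f a))
    (hb : frame.IsIndepSet (trace f b)) (hc : frame.IsIndepSet (trace f c))
    (hab : G.Adj a b) (hac : G.Adj a c) : ¬G.Adj b c := by
  intro hbc
  have dab := disjoint_trace_of_adj hP hB hPr f hab ha hb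
  have dac := disjoint_trace_of_adj hP hB hPr f hac ha hc
  have dbc := disjoint_trace_of_adj hP hB hPr f hbc hb hc
  have cab {h k : Fin 7} := hB.adj_of_mem_trace f hab hac hbc dab dac dbc (h := h) (k := k)
  have cac {h k : Fin 7} :=
    hB.adj_of_mem_trace f hac hab hbc.symm dac dab dbc.symm (h := h) (k := k)
  have cbc {h k : Fin 7} :=
    hB.adj_of_mem_trace f hbc hab.symm hac.symm dbc dab.symm dac.symm (h := h) (k := k)
  obtain ⟨h, hh⟩ := trace_nonempty_of_complete hP hB hPr f hab.symm hac.symm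
    fun _ hk _ hl ↦ cbc hk hl
  obtain ⟨k, hk⟩ := trace_nonempty_of_complete hP hB hPr f hab hbc.symm
    fun _ hh _ hl ↦ cac hh hl
  obtain ⟨l, hl⟩ := trace_nonempty_of_complete hP hB hPr f hac hbc
    fun _ hh _ hk ↦ cab hh hk
  exact frame_cliqueFree_three _ (is3Clique_triple_iff.2 ⟨cab hh hk, cac hh hl, cbc hk hl⟩)

end Frame

theorem stmt13 (G : SimpleGraph V)
    (hP : P6Free G) (hB : BullFree G) (hPr : IsPrimeGraph G)
    (x : V) (c : Fin 5 → V) (hc : IsInducedC5 G c)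
    (hx : ∀ i : Fin 5, ¬ G.Adj x (c i) ∧ c i ≠ x) :
    ∃ F : Set V, G.IsClique F ∧
      ¬ ∃ a b e : V, a ∉ F ∧ b ∉ F ∧ e ∉ F ∧ G.Adj a b ∧ G.Adj a e ∧ G.Adj b e := by
  obtain ⟨f⟩ := exists_frame hP hB hPr hc.embedding (v := x) hx
  refine ⟨{v | trace f v = cliqueTrace}, isClique_trace_eq_cliqueTrace hP hB hPr f, ?_⟩
  rintro ⟨a, b, e, ha, hb, he, hab, hae, hbe⟩
  have isIndepSet_trace {v : V} := (isIndepSet_trace_or_eq_cliqueTrace hP hB hPr f v).resolve_right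
  exact not_triangle_of_isIndepSet_trace hP hB hPr f (isIndepSet_trace ha) (isIndepSet_trace hb)
    (isIndepSet_trace he) hab hae hbe
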